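/- Let G be a bipartite graph with vertex classes (A,B) and density d = e_G(A,B)/(|A||B|), and let A = {A_i}_i be a partition of A and B = {B_j}_j a partition of B such that for every S ⊆ A and T ⊆ B with |S| ≥ ε|A| and |T| ≥ ε|B| one has Σ_{i,j} (|S_i||T_j|/(|S||T|)) · |d_G(S_i,T_j) − d_{i,j}| ≤ ε, where S_i = S ∩ A_i, T_j = T ∩ B_j, and d_{i,j} = d_G(A_i,B_j). If |A|, |B| ≥ 8/ε⁴, then there exists a bipartite graph G̃ on the same vertex classes with |E(G) △ E(G̃)| ≤ Δ such that the pair (A,B) is 2ε-regular in G̃, where Δ = Σ_{i,j} |d_{i,j} − d| · |A_i||B_j|. -/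

import Mathlib

/-!
The graph `G̃` is obtained by random modification. On a block `A_i × B_j` with `d_{i,j} ≥ d` each
edge is kept with probability `d / d_{i,j}`; on a block with `d_{i,j} < d` each non-edge is added
with probability `(d - d_{i,j}) / (1 - d_{i,j})`. On each block the resulting matrix of
probabilities `p` is the image of the adjacency matrix under an affine contraction taking `d_{i,j}`
to `d`, so its averages over large `S × T` are within `ε` of `d` by the weak regularity of `G`, and
the expected number of modifications is exactly `Δ` (`exists_target`).

It remains to round `p` to a `0`/`1` matrix (`exists_regular_matrix`). If `Δ ≤ 4ε³|A||B|`, then `G`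
itself is regular enough. Otherwise `p` is first moved a fraction `ε/16` of the way towards the
adjacency matrix of `G`; this costs little regularity and lowers the expected number of
modifications to `(1 - ε/16)Δ`. A Chernoff bound with a union bound over all large `(S, T)` then
gives a rounding with at most `Δ` modifications in which every density is within `15ε/32` of its
expectation; this is where `|A|, |B| ≥ 8/ε⁴` is used. The probabilistic step is carried out
by the method of conditional expectations on a sum of exponential moments
(`exists_round_potential`), so no probability space is needed.
-/

open Finset
open scoped Classical

/-- `eCnt G A B` is the number of ordered pairs `(u,v) ∈ A × B` with `uv` an edge of `G`. -/
noncomputable def eCnt {V : Type*} [Fintype V] (G : SimpleGraph V) (A B : Finset V) : ℕ :=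
  ((A ×ˢ B).filter fun p => G.Adj p.1 p.2).card

/-- The edge density `d_G(A,B)` between vertex subsets `A` and `B`. -/
noncomputable def dens {V : Type*} [Fintype V] (G : SimpleGraph V) (A B : Finset V) : ℝ :=
  eCnt G A B / (A.card * B.card)

/-- The pair `(A,B)` is `ε`-regular. -/
def RegPair {V : Type*} [Fintype V] (G : SimpleGraph V) (ε : ℝ) (A B : Finset V) : Prop :=
  ∀ A' ⊆ A, ∀ B' ⊆ B, ε * A.card ≤ A'.card → ε * B.card ≤ B'.card →
    |dens G A B - dens G A' B'| ≤ ε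

/-! ### Rounding probabilities to `0`/`1` -/

lemma exp_le_add_exp_sq (x : ℝ) : Real.exp x ≤ x + Real.exp (x ^ 2) := by
  have h2 : x ^ 2 + 1 ≤ Real.exp (x ^ 2) := Real.add_one_le_exp _
  rcases le_or_gt |x| 1 with h | h
  · have h1 := (abs_le.1 (Real.abs_exp_sub_one_sub_id_le h)).2
    linarith
  · rcases lt_abs.1 h with h | h
    · have : Real.exp x ≤ Real.exp (x ^ 2) := Real.exp_le_exp.2 (by nlinarith)
      linarith
    · have : Real.exp x ≤ 1 := Real.exp_le_one_iff.2 (by linarith)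
      nlinarith

/-- The exponential moment of a centred Bernoulli variable. -/
lemma bernoulli_mgf_le {p : ℝ} (h0 : 0 ≤ p) (h1 : p ≤ 1) (a : ℝ) :
    p * Real.exp (a * (1 - p)) + (1 - p) * Real.exp (a * (0 - p)) ≤ Real.exp (a ^ 2) := by
  have e1 : Real.exp (a * (1 - p)) ≤ a * (1 - p) + Real.exp (a ^ 2) := by
    refine (exp_le_add_exp_sq _).trans ?_
    have : (a * (1 - p)) ^ 2 ≤ a ^ 2 := by
      rw [mul_pow]; exact mul_le_of_le_one_right (sq_nonneg a) (by nlinarith)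
    have := Real.exp_le_exp.2 this
    linarith
  have e0 : Real.exp (a * (0 - p)) ≤ a * (0 - p) + Real.exp (a ^ 2) := by
    refine (exp_le_add_exp_sq _).trans ?_
    have : (a * (0 - p)) ^ 2 ≤ a ^ 2 := by
      rw [mul_pow]; exact mul_le_of_le_one_right (sq_nonneg a) (by nlinarith)
    have := Real.exp_le_exp.2 this
    linarith
  have := mul_le_mul_of_nonneg_left e1 h0
  have := mul_le_mul_of_nonneg_left e0 (sub_nonneg.2 h1)
  linarith

/-- Method of conditional expectations: the coordinates are rounded one at a time, never letting
the weighted sum of exponential moments exceed its upper bound. -/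
lemma exists_round_potential {ι κ : Type*} (F : Finset ι) (a : ι → κ → ℝ) (p : κ → ℝ)
    (I : Finset κ) (hp0 : ∀ k ∈ I, 0 ≤ p k) (hp1 : ∀ k ∈ I, p k ≤ 1) :
    ∀ c : ι → ℝ, (∀ f ∈ F, 0 ≤ c f) → ∃ x : κ → ℝ, (∀ k, x k = 0 ∨ x k = 1) ∧
      ∑ f ∈ F, c f * Real.exp (∑ k ∈ I, a f k * (x k - p k)) ≤
        ∑ f ∈ F, c f * Real.exp (∑ k ∈ I, a f k ^ 2) := by
  induction I using Finset.induction_on with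
  | empty => intro c _; exact ⟨fun _ => 0, fun _ => Or.inl rfl, by simp⟩
  | insert j I hj ih =>
    intro c hc
    have ih' := ih (fun k hk => hp0 k (mem_insert_of_mem hk))
      (fun k hk => hp1 k (mem_insert_of_mem hk))
    have h0 := hp0 j (mem_insert_self _ _)
    have h1 := hp1 j (mem_insert_self _ _)
    set R := ∑ f ∈ F, c f * Real.exp (∑ k ∈ insert j I, a f k ^ 2) with hR
    let Q : ℝ → ℝ := fun y =>
      ∑ f ∈ F, c f * Real.exp (a f j * (y - p j)) * Real.exp (∑ k ∈ I, a f k ^ 2)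
    have hQ : p j * Q 1 + (1 - p j) * Q 0 ≤ R := by
      simp only [Q, hR, mul_sum, ← sum_add_distrib]
      refine sum_le_sum fun f hf => ?_
      rw [sum_insert hj, Real.exp_add]
      have := mul_le_mul_of_nonneg_left (bernoulli_mgf_le h0 h1 (a f j))
        (mul_nonneg (hc f hf) (Real.exp_pos (∑ k ∈ I, a f k ^ 2)).le)
      linarith
    have hy : ∃ y : ℝ, (y = 0 ∨ y = 1) ∧ Q y ≤ R := by
      by_contra! h
      have q0 := h 0 (Or.inl rfl)
      have q1 := h 1 (Or.inr rfl)
      rcases h0.eq_or_lt with hp | hp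
      · rw [← hp] at hQ; linarith
      · have := mul_lt_mul_of_pos_left q1 hp
        have := mul_le_mul_of_nonneg_left q0.le (sub_nonneg.2 h1)
        linarith
    obtain ⟨y, hy01, hyR⟩ := hy
    obtain ⟨x, hx, hxs⟩ := ih' (fun f => c f * Real.exp (a f j * (y - p j)))
      (fun f hf => mul_nonneg (hc f hf) (Real.exp_pos _).le)
    refine ⟨Function.update x j y, fun k => ?_, le_trans (le_of_eq ?_) (hxs.trans hyR)⟩
    · by_cases hk : k = j
      · subst hk; simpa using hy01
      · simpa [hk] using hx k
    · refine sum_congr rfl fun f _ => ?_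
      rw [sum_insert hj, Real.exp_add, Function.update_self, mul_assoc]
      congr 3
      refine sum_congr rfl fun k hk => ?_
      rw [Function.update_of_ne (ne_of_mem_of_not_mem hk hj)]

/-- Union bound for the upper tails of the linear forms `a f`, `f ∈ F`. -/
lemma exists_round {ι κ : Type*} (F : Finset ι) (a : ι → κ → ℝ) (t : ι → ℝ) (p : κ → ℝ)
    (I : Finset κ) (hp0 : ∀ k ∈ I, 0 ≤ p k) (hp1 : ∀ k ∈ I, p k ≤ 1)
    (h : ∑ f ∈ F, Real.exp (∑ k ∈ I, a f k ^ 2 - t f) < 1) :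
    ∃ x : κ → ℝ, (∀ k, x k = 0 ∨ x k = 1) ∧
      ∀ f ∈ F, ∑ k ∈ I, a f k * (x k - p k) < t f := by
  obtain ⟨x, hx, hs⟩ := exists_round_potential F a p I hp0 hp1 (fun f => Real.exp (-t f))
    (fun f _ => (Real.exp_pos _).le)
  refine ⟨x, hx, fun f hf => ?_⟩
  simp only [← Real.exp_add] at hs
  have h1 := single_le_sum (f := fun f => Real.exp (-t f + ∑ k ∈ I, a f k * (x k - p k)))
    (fun f _ => (Real.exp_pos _).le) hf
  have h2 : ∑ f ∈ F, Real.exp (-t f + ∑ k ∈ I, a f k ^ 2) < 1 := by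
    refine lt_of_eq_of_lt (sum_congr rfl fun f _ => ?_) h
    congr 1; ring
  have h3 := (h1.trans hs).trans_lt h2
  have := Real.exp_lt_one_iff.1 h3
  linarith

/-! ### A regular perturbation of a `0`/`1` matrix -/

/-- The union bound over the pairs `(S, T)`, both signs, and the modification count. -/
lemma union_bound_numeric (n : ℕ) (hn : 16 ≤ n) :
    Real.exp (-1) + 2 ^ n * 2 * Real.exp (-(225 / 256) * n) < 1 := by
  have hn' : (16 : ℝ) ≤ n := by exact_mod_cast hn
  have h2 : (2 : ℝ) ^ n = Real.exp (n * Real.log 2) := by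
    rw [Real.exp_nat_mul, Real.exp_log (by norm_num)]
  have h3 : (2 : ℝ) ^ n * Real.exp (-(225 / 256) * n) ≤ Real.exp (-2) := by
    rw [h2, ← Real.exp_add]
    apply Real.exp_le_exp.2
    have := Real.log_two_lt_d9
    nlinarith
  have h1 : Real.exp (-1) < 0.4 := by
    rw [Real.exp_neg]
    have := Real.exp_one_gt_d9
    exact (inv_lt_comm₀ (by positivity) (by norm_num)).2 (by norm_num at this ⊢; linarith)
  have h4 : Real.exp (-2) = Real.exp (-1) * Real.exp (-1) := by rw [← Real.exp_add]; norm_num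
  have := Real.exp_pos (-1)
  nlinarith

set_option maxHeartbeats 1000000 in
/-- If `g` is a `0`/`1` matrix on `A × B` and `p` is a matrix of probabilities whose averages over
large `S × T` are within `ε` of its overall average `d`, then `p` can be replaced by a `0`/`1`
matrix `x` that is `2ε`-regular and at `ℓ¹`-distance from `g` at most that of `p`. -/
lemma exists_regular_matrix {V : Type*} [DecidableEq V] (A B : Finset V) (ε d : ℝ) (hε : 0 < ε)
    (hε2 : ε ≤ 1 / 2) (g p : V × V → ℝ) (hg : ∀ k, g k = 0 ∨ g k = 1)
    (hp0 : ∀ k, 0 ≤ p k) (hp1 : ∀ k, p k ≤ 1)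
    (hgd : ∑ k ∈ A ×ˢ B, g k = d * (A.card * B.card))
    (hpd : ∑ k ∈ A ×ˢ B, p k = d * (A.card * B.card))
    (hpST : ∀ S ⊆ A, ∀ T ⊆ B, ε * A.card ≤ S.card → ε * B.card ≤ T.card →
      |∑ k ∈ S ×ˢ T, p k - d * (S.card * T.card)| ≤ ε * (S.card * T.card))
    (hA : (8 : ℝ) / ε ^ 4 ≤ A.card) (hB : (8 : ℝ) / ε ^ 4 ≤ B.card) :
    ∃ x : V × V → ℝ, (∀ k, x k = 0 ∨ x k = 1) ∧
      ∑ k ∈ A ×ˢ B, |x k - g k| ≤ ∑ k ∈ A ×ˢ B, |p k - g k| ∧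
      ∃ η : ℝ, |∑ k ∈ A ×ˢ B, x k - d * (A.card * B.card)| ≤ η * (A.card * B.card) ∧
        ∀ S ⊆ A, ∀ T ⊆ B, 2 * ε * A.card ≤ S.card → 2 * ε * B.card ≤ T.card →
          |∑ k ∈ S ×ˢ T, x k - d * (S.card * T.card)| ≤ (2 * ε - η) * (S.card * T.card) := by
  set a : ℝ := (A.card : ℝ) with ha
  set b : ℝ := (B.card : ℝ) with hb
  have hε4 : 0 < ε ^ 4 := by positivity
  have ha8 : 8 ≤ ε ^ 4 * a := by rw [div_le_iff₀ hε4] at hA; linarith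
  have hb8 : 8 ≤ ε ^ 4 * b := by rw [div_le_iff₀ hε4] at hB; linarith
  have ha0 : 0 < a := lt_of_lt_of_le (by positivity) hA
  have hb0 : 0 < b := lt_of_lt_of_le (by positivity) hB
  have hbig : ∀ S T : Finset V, 2 * ε * a ≤ S.card → 2 * ε * b ≤ T.card →
      4 * ε ^ 2 * (a * b) ≤ (S.card : ℝ) * T.card := fun S T hS hT => by
    have := mul_le_mul hS hT (by positivity) (by positivity)
    linarith
  have hsmall : ∀ S T : Finset V, 2 * ε * a ≤ S.card → 2 * ε * b ≤ T.card →
      ε * a ≤ S.card ∧ ε * b ≤ T.card := fun S T hS hT =>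
    ⟨by nlinarith [mul_pos hε ha0], by nlinarith [mul_pos hε hb0]⟩
  set D := ∑ k ∈ A ×ˢ B, |p k - g k| with hD
  by_cases hDsmall : D ≤ 4 * ε ^ 3 * (a * b)
  · -- Few expected modifications: `g` itself is already regular.
    refine ⟨g, hg, ?_, 0, by rw [hgd]; simp, ?_⟩
    · simp only [sub_self, abs_zero, sum_const_zero]
      exact sum_nonneg fun _ _ => abs_nonneg _
    · intro S hS T hT hSc hTc
      have h1 := hpST S hS T hT (hsmall S T hSc hTc).1 (hsmall S T hSc hTc).2
      have h2 : |∑ k ∈ S ×ˢ T, p k - ∑ k ∈ S ×ˢ T, g k| ≤ D := by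
        rw [← sum_sub_distrib]
        exact (abs_sum_le_sum_abs _ _).trans
          (sum_le_sum_of_subset_of_nonneg (product_subset_product hS hT)
            fun _ _ _ => abs_nonneg _)
      have h3 := mul_le_mul_of_nonneg_left (hbig S T hSc hTc) hε.le
      rw [abs_le] at *
      constructor <;> nlinarith
  · push Not at hDsmall
    -- Moving `p` slightly towards `g` keeps the expected number of modifications below `D`.
    set θ := ε / 16 with hθ
    set q : V × V → ℝ := fun k => (1 - θ) * p k + θ * g k with hq
    have hθ0 : 0 < θ := by positivity
    have hθ1 : θ ≤ 1 := by rw [hθ]; linarith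
    have hg0 : ∀ k, 0 ≤ g k := fun k => by rcases hg k with h | h <;> simp [h]
    have hg1 : ∀ k, g k ≤ 1 := fun k => by rcases hg k with h | h <;> simp [h]
    have hq0 : ∀ k, 0 ≤ q k := fun k => by
      have := mul_nonneg (sub_nonneg.2 hθ1) (hp0 k)
      have := mul_nonneg hθ0.le (hg0 k)
      simp only [hq]; linarith
    have hq1 : ∀ k, q k ≤ 1 := fun k => by
      have := mul_le_mul_of_nonneg_left (hp1 k) (sub_nonneg.2 hθ1)
      have := mul_le_mul_of_nonneg_left (hg1 k) hθ0.le
      simp only [hq]; linarith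
    -- `η` is the allowed fluctuation of densities, `η / 2` and `μ` the optimal exponents.
    set η := 15 * ε / 32 with hη
    set μ := ε ^ 4 / 8 with hμ
    have hη0 : 0 < η := by positivity
    have hμ0 : 0 < μ := by positivity
    let L := (A.powerset ×ˢ B.powerset).filter fun P : Finset V × Finset V =>
      2 * ε * a ≤ P.1.card ∧ 2 * ε * b ≤ P.2.card
    let sg : Bool → ℝ := fun s => if s then 1 else -1
    have hsg : ∀ s, sg s ^ 2 = 1 := fun s => by cases s <;> simp [sg]
    let F : Finset (Unit ⊕ ((Finset V × Finset V) × Bool)) :=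
      (univ : Finset Unit).disjSum (L ×ˢ (univ : Finset Bool))
    let w : Unit ⊕ ((Finset V × Finset V) × Bool) → V × V → ℝ := Sum.elim
      (fun _ k => μ * (1 - 2 * g k))
      (fun z k => if k ∈ z.1.1 ×ˢ z.1.2 then sg z.2 * (η / 2) else 0)
    let t : Unit ⊕ ((Finset V × Finset V) × Bool) → ℝ := Sum.elim
      (fun _ => μ * (θ * D))
      (fun z => η / 2 * (η * ((z.1.1.card : ℝ) * z.1.2.card)))
    have hab16 : 16 ≤ A.card + B.card := by
      have h1 : ε ^ 4 ≤ 1 := pow_le_one₀ hε.le (by linarith)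
      have h2 : (8 : ℝ) ≤ a := by nlinarith
      have h3 : (8 : ℝ) ≤ b := by nlinarith
      have h4 : 8 ≤ A.card := by rw [ha] at h2; exact_mod_cast h2
      have h5 : 8 ≤ B.card := by rw [hb] at h3; exact_mod_cast h3
      omega
    have hLsub : ∀ z ∈ L, z.1 ⊆ A ∧ z.2 ⊆ B ∧ 2 * ε * a ≤ z.1.card ∧ 2 * ε * b ≤ z.2.card := by
      intro z hz
      simp only [L, mem_filter, mem_product, mem_powerset] at hz
      exact ⟨hz.1.1, hz.1.2, hz.2.1, hz.2.2⟩
    have hrestrict : ∀ S ⊆ A, ∀ T ⊆ B, ∀ f : V × V → ℝ,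
        ∑ k ∈ A ×ˢ B, (if k ∈ S ×ˢ T then f k else 0) = ∑ k ∈ S ×ˢ T, f k := by
      intro S hS T hT f
      rw [sum_ite_mem, inter_eq_right.2 (product_subset_product hS hT)]
    have hsum : ∑ f ∈ F, Real.exp (∑ k ∈ A ×ˢ B, w f k ^ 2 - t f) < 1 := by
      rw [sum_disjSum]
      refine lt_of_le_of_lt (add_le_add ?_ ?_) (union_bound_numeric (A.card + B.card) hab16)
      · simp only [univ_unique, sum_singleton, w, t, Sum.elim_inl]
        apply Real.exp_le_exp.2
        have h1 : ∑ k ∈ A ×ˢ B, (μ * (1 - 2 * g k)) ^ 2 = μ ^ 2 * (a * b) := by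
          rw [sum_congr rfl (g := fun _ => μ ^ 2), sum_const, card_product, nsmul_eq_mul]
          · push_cast; ring
          · intro k _
            rcases hg k with h | h <;> rw [h] <;> ring
        rw [h1]
        have h2 : μ * (θ * (4 * ε ^ 3 * (a * b))) ≤ μ * (θ * D) := by gcongr
        have h3 : 8 * 8 ≤ (ε ^ 4 * a) * (ε ^ 4 * b) := by gcongr
        have h4 : μ ^ 2 * (a * b) = (ε ^ 4 * a) * (ε ^ 4 * b) / 64 := by rw [hμ]; ring
        have h5 : μ * (θ * (4 * ε ^ 3 * (a * b))) = (ε ^ 4 * a) * (ε ^ 4 * b) / 32 := by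
          rw [hμ, hθ]; ring
        linarith
      · refine (sum_le_card_nsmul _ _ (Real.exp (-(225 / 256) * ((A.card + B.card : ℕ) : ℝ))) ?_).trans ?_
        · rintro ⟨⟨S, T⟩, s⟩ hz
          obtain ⟨hS, hT, hSc, hTc⟩ := hLsub _ (mem_product.1 hz).1
          apply Real.exp_le_exp.2
          simp only [w, t, Sum.elim_inr]
          have h1 : ∑ k ∈ A ×ˢ B, (if k ∈ S ×ˢ T then sg s * (η / 2) else 0) ^ 2
              = (η / 2) ^ 2 * ((S.card : ℝ) * T.card) := by
            simp only [ite_pow, mul_pow, hsg, one_mul]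
            rw [zero_pow (by norm_num), hrestrict S hS T hT, sum_const, card_product, nsmul_eq_mul]
            push_cast; ring
          rw [h1]
          have h2 := mul_le_mul_of_nonneg_left (hbig S T hSc hTc) (sq_nonneg η)
          have h3 : η ^ 2 * (4 * ε ^ 2 * (a * b)) = 225 / 256 * (ε ^ 4 * a * b) := by
            rw [hη]; ring
          have h4 : 8 * b ≤ ε ^ 4 * a * b := by gcongr
          have h5 : 8 * a ≤ ε ^ 4 * b * a := by gcongr
          push_cast
          rw [← ha, ← hb]
          linarith
        · rw [nsmul_eq_mul]
          gcongr
          rw [card_product, card_univ, Fintype.card_bool]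
          have : L.card ≤ 2 ^ (A.card + B.card) := by
            refine (card_filter_le _ _).trans ?_
            rw [card_product, card_powerset, card_powerset, pow_add]
          push_cast
          have : (L.card : ℝ) ≤ 2 ^ (A.card + B.card) := by exact_mod_cast this
          linarith
    obtain ⟨x, hx, hxF⟩ := exists_round F w t q (A ×ˢ B) (fun k _ => hq0 k) (fun k _ => hq1 k) hsum
    have hdev : ∀ S ⊆ A, ∀ T ⊆ B, 2 * ε * a ≤ S.card → 2 * ε * b ≤ T.card →
        |∑ k ∈ S ×ˢ T, x k - ∑ k ∈ S ×ˢ T, q k| ≤ η * ((S.card : ℝ) * T.card) := by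
      intro S hS T hT hSc hTc
      have key : ∀ s, sg s * ∑ k ∈ S ×ˢ T, (x k - q k) ≤ η * ((S.card : ℝ) * T.card) := by
        intro s
        have h := hxF (Sum.inr ((S, T), s)) (by
          simp only [F, L, inr_mem_disjSum, mem_product, mem_filter, mem_powerset, mem_univ,
            and_true]
          exact ⟨⟨hS, hT⟩, hSc, hTc⟩)
        simp only [w, t, Sum.elim_inr, ite_mul, zero_mul] at h
        rw [hrestrict S hS T hT, ← mul_sum] at h
        have h' : η / 2 * (sg s * ∑ k ∈ S ×ˢ T, (x k - q k)) <
            η / 2 * (η * ((S.card : ℝ) * T.card)) := by linarith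
        exact (lt_of_mul_lt_mul_left h' (by positivity)).le
      have k1 := key true
      have k2 := key false
      simp only [sg, sum_sub_distrib] at k1 k2
      rw [abs_le]
      constructor
      · norm_num at k2; linarith
      · norm_num at k1; linarith
    have hqsum : ∀ S T : Finset V, ∑ k ∈ S ×ˢ T, q k =
        (1 - θ) * ∑ k ∈ S ×ˢ T, p k + θ * ∑ k ∈ S ×ˢ T, g k := by
      intro S T; simp only [hq, sum_add_distrib, mul_sum]
    refine ⟨x, hx, ?_, η, ?_, ?_⟩
    · have h := hxF (Sum.inl ()) (by simp [F])
      simp only [w, t, Sum.elim_inl, mul_assoc μ] at h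
      rw [← mul_sum] at h
      have h' := lt_of_mul_lt_mul_left h hμ0.le
      have e1 : ∀ y : V × V → ℝ, (∀ k, 0 ≤ y k) → (∀ k, y k ≤ 1) → ∀ k,
          |y k - g k| = (1 - 2 * g k) * (y k - g k) := by
        intro y y0 y1 k
        rcases hg k with h | h
        · rw [h, abs_of_nonneg (by linarith [y0 k])]; ring
        · rw [h, abs_of_nonpos (by linarith [y1 k])]; ring
      have x0 : ∀ k, 0 ≤ x k := fun k => by rcases hx k with h | h <;> simp [h]
      have x1 : ∀ k, x k ≤ 1 := fun k => by rcases hx k with h | h <;> simp [h]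
      have e2 : ∑ k ∈ A ×ˢ B, |x k - g k| =
          ∑ k ∈ A ×ˢ B, (1 - 2 * g k) * (x k - q k) + (1 - θ) * D := by
        rw [hD, mul_sum, ← sum_add_distrib]
        refine sum_congr rfl fun k _ => ?_
        rw [e1 x x0 x1, e1 p hp0 hp1]
        simp only [hq]; ring
      rw [e2]; linarith
    · have h := hdev A Subset.rfl B Subset.rfl (by nlinarith) (by nlinarith)
      rw [hqsum, hpd, hgd] at h
      convert h using 2
      ring
    · intro S hS T hT hSc hTc
      have h := hdev S hS T hT hSc hTc
      have h1 := hpST S hS T hT (hsmall S T hSc hTc).1 (hsmall S T hSc hTc).2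
      rw [hqsum] at h
      have hbd : ∀ y : V × V → ℝ, (∀ k, 0 ≤ y k) → (∀ k, y k ≤ 1) →
          0 ≤ ∑ k ∈ S ×ˢ T, y k ∧ ∑ k ∈ S ×ˢ T, y k ≤ (S.card : ℝ) * T.card := by
        intro y y0 y1
        refine ⟨sum_nonneg fun k _ => y0 k, ?_⟩
        have := sum_le_card_nsmul (S ×ˢ T) y 1 fun k _ => y1 k
        rw [card_product, nsmul_eq_mul] at this
        push_cast at this; linarith
      obtain ⟨p1, p2⟩ := hbd p hp0 hp1
      obtain ⟨g1, g2⟩ := hbd g hg0 hg1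
      have h2 : |∑ k ∈ S ×ˢ T, g k - ∑ k ∈ S ×ˢ T, p k| ≤ (S.card : ℝ) * T.card := by
        rw [abs_le]; constructor <;> linarith
      rw [abs_le] at h h1 h2 ⊢
      have l1 := mul_le_mul_of_nonneg_left h2.1 hθ0.le
      have l2 := mul_le_mul_of_nonneg_left h2.2 hθ0.le
      have hc : 2 * ε - η = ε + θ + η := by rw [hη, hθ]; ring
      rw [hc]
      constructor <;> nlinarith

/-! ### The block-wise target probabilities -/

/-- An affine map `y ↦ α + β y` contracting `[0, 1]` into itself, sending `D` to `d`, and moving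
all points in the same direction: it scales towards `0` if `d ≤ D` and towards `1` otherwise. -/
lemma exists_affine {D d : ℝ} (hD0 : 0 ≤ D) (hd0 : 0 ≤ d) (hd1 : d ≤ 1) :
    ∃ α β : ℝ, 0 ≤ α ∧ 0 ≤ β ∧ α + β ≤ 1 ∧ α + β * D = d ∧ (α = 0 ∨ α + β = 1) := by
  rcases le_or_gt d D with h | h
  · rcases hD0.eq_or_lt with h0 | h0
    · exact ⟨0, 0, le_rfl, le_rfl, by norm_num, by linarith, Or.inl rfl⟩
    · refine ⟨0, d / D, le_rfl, by positivity, ?_, ?_, Or.inl rfl⟩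
      · rw [zero_add]; exact (div_le_one h0).2 h
      · field_simp; ring
  · have h1 : 0 < 1 - D := by linarith
    have h2 : (1 - d) / (1 - D) ≤ 1 := (div_le_one h1).2 (by linarith)
    refine ⟨1 - (1 - d) / (1 - D), (1 - d) / (1 - D), by linarith,
      div_nonneg (by linarith) h1.le, by linarith, ?_, Or.inr (by ring)⟩
    have : (1 - d) / (1 - D) * (1 - D) = 1 - d := div_mul_cancel₀ _ h1.ne'
    linarith

lemma sum_adj {V : Type*} [Fintype V] (G : SimpleGraph V) (S T : Finset V) :
    ∑ k ∈ S ×ˢ T, (if G.Adj k.1 k.2 then (1 : ℝ) else 0) = dens G S T * (S.card * T.card) := by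
  rw [_root_.dens, sum_boole, ← eCnt]
  rcases eq_or_ne ((S.card : ℝ) * T.card) 0 with h | h
  · have h' : (S ×ˢ T).card = 0 := by rw [card_product]; exact_mod_cast h
    have : eCnt G S T = 0 := by
      rw [eCnt, card_eq_zero.1 h']; simp
    rw [this, h]; simp
  · rw [div_mul_cancel₀ _ h]

lemma pair_dens_nonneg {V : Type*} [Fintype V] (G : SimpleGraph V) (S T : Finset V) :
    0 ≤ dens G S T := by unfold _root_.dens; positivity

lemma pair_dens_le_one {V : Type*} [Fintype V] (G : SimpleGraph V) (S T : Finset V) :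
    dens G S T ≤ 1 := by
  unfold _root_.dens
  refine div_le_one_of_le₀ ?_ (by positivity)
  have : eCnt G S T ≤ S.card * T.card := by
    rw [← card_product]; exact card_filter_le _ _
  exact_mod_cast this

lemma sum_blocks {V : Type*} [DecidableEq V] {A B : Finset V} (PA : Finpartition A)
    (PB : Finpartition B) (S T : Finset V) (hS : S ⊆ A) (hT : T ⊆ B) (f : V × V → ℝ) :
    ∑ k ∈ S ×ˢ T, f k =
      ∑ Ai ∈ PA.parts, ∑ Bj ∈ PB.parts, ∑ k ∈ (S ∩ Ai) ×ˢ (T ∩ Bj), f k := by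
  rw [← sum_product' PA.parts PB.parts
    (fun Ai Bj => ∑ k ∈ (S ∩ Ai) ×ˢ (T ∩ Bj), f k)]
  rw [← sum_fiberwise_of_maps_to (s := S ×ˢ T) (t := PA.parts ×ˢ PB.parts)
    (g := fun k => (PA.part k.1, PB.part k.2))]
  · refine sum_congr rfl ?_
    rintro ⟨Ai, Bj⟩ hij
    obtain ⟨hi, hj⟩ := mem_product.1 hij
    refine sum_congr ?_ fun _ _ => rfl
    ext ⟨u, v⟩
    simp only [mem_filter, mem_product, mem_inter, Prod.mk.injEq, PA.part_eq_iff_mem hi,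
      PB.part_eq_iff_mem hj]
    tauto
  · rintro ⟨u, v⟩ huv
    obtain ⟨hu, hv⟩ := mem_product.1 huv
    exact mem_product.2 ⟨PA.part_mem.2 (hS hu), PB.part_mem.2 (hT hv)⟩

lemma sum_card_blocks {V : Type*} [DecidableEq V] {A B : Finset V} (PA : Finpartition A)
    (PB : Finpartition B) (S T : Finset V) (hS : S ⊆ A) (hT : T ⊆ B) :
    ∑ Ai ∈ PA.parts, ∑ Bj ∈ PB.parts, ((S ∩ Ai).card : ℝ) * (T ∩ Bj).card =
      S.card * T.card := by
  have := sum_blocks PA PB S T hS hT fun _ => 1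
  simp only [sum_const, card_product, nsmul_eq_mul, mul_one, Nat.cast_mul] at this
  exact this.symm

/-- Probabilities `p` whose average over each block `A_i × B_j` is `d`, moving each block in one
direction, so that the `ℓ¹`-distance to `G` is `Δ`; being a contraction of the adjacency matrix on
each block, `p` inherits the weak regularity of `G`. -/
lemma exists_target {V : Type*} [Fintype V] [DecidableEq V] (G : SimpleGraph V)
    (A B : Finset V) (PA : Finpartition A) (PB : Finpartition B) (d : ℝ) (hd0 : 0 ≤ d)
    (hd1 : d ≤ 1) :
    ∃ p : V × V → ℝ, (∀ k, 0 ≤ p k) ∧ (∀ k, p k ≤ 1) ∧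
      ∑ k ∈ A ×ˢ B, p k = d * (A.card * B.card) ∧
      ∑ k ∈ A ×ˢ B, |p k - if G.Adj k.1 k.2 then (1 : ℝ) else 0| =
        ∑ Ai ∈ PA.parts, ∑ Bj ∈ PB.parts, |dens G Ai Bj - d| * ((Ai.card : ℝ) * Bj.card) ∧
      ∀ S ⊆ A, ∀ T ⊆ B, |∑ k ∈ S ×ˢ T, p k - d * (S.card * T.card)| ≤
        ∑ Ai ∈ PA.parts, ∑ Bj ∈ PB.parts, ((S ∩ Ai).card : ℝ) * ((T ∩ Bj).card : ℝ) *
          |dens G (S ∩ Ai) (T ∩ Bj) - dens G Ai Bj| := by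
  choose α β hα hβ hαβ heq hor using fun X Y : Finset V =>
    exists_affine (pair_dens_nonneg G X Y) hd0 hd1
  set g : V × V → ℝ := fun k => if G.Adj k.1 k.2 then (1 : ℝ) else 0 with hg
  have hg01 : ∀ k, g k = 0 ∨ g k = 1 := fun k => by
    simp only [hg]; split_ifs <;> simp
  let p : V × V → ℝ := fun k =>
    α (PA.part k.1) (PB.part k.2) + β (PA.part k.1) (PB.part k.2) * g k
  have hpblock : ∀ Ai ∈ PA.parts, ∀ Bj ∈ PB.parts, ∀ X ⊆ Ai, ∀ Y ⊆ Bj, ∀ k ∈ X ×ˢ Y,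
      p k = α Ai Bj + β Ai Bj * g k := by
    intro Ai hi Bj hj X hX Y hY k hk
    obtain ⟨h1, h2⟩ := mem_product.1 hk
    simp only [p, PA.part_eq_of_mem hi (hX h1), PB.part_eq_of_mem hj (hY h2)]
  have hpsum : ∀ Ai ∈ PA.parts, ∀ Bj ∈ PB.parts, ∀ X ⊆ Ai, ∀ Y ⊆ Bj,
      ∑ k ∈ X ×ˢ Y, p k =
        d * ((X.card : ℝ) * Y.card) +
          β Ai Bj * ((X.card : ℝ) * Y.card * (dens G X Y - dens G Ai Bj)) := by
    intro Ai hi Bj hj X hX Y hY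
    rw [sum_congr rfl (hpblock Ai hi Bj hj X hX Y hY), sum_add_distrib, ← mul_sum,
      sum_adj, sum_const, card_product, nsmul_eq_mul]
    push_cast
    linear_combination ((X.card : ℝ) * Y.card) * heq Ai Bj
  refine ⟨p, fun k => ?_, fun k => ?_, ?_, ?_, ?_⟩
  · rcases hg01 k with h | h <;> simp only [p, h] <;>
      nlinarith [hα (PA.part k.1) (PB.part k.2), hβ (PA.part k.1) (PB.part k.2)]
  · rcases hg01 k with h | h <;> simp only [p, h] <;>
      nlinarith [hαβ (PA.part k.1) (PB.part k.2), hβ (PA.part k.1) (PB.part k.2)]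
  · rw [sum_blocks PA PB A B Subset.rfl Subset.rfl,
      ← sum_card_blocks PA PB A B Subset.rfl Subset.rfl, mul_sum]
    refine sum_congr rfl fun Ai hi => ?_
    rw [mul_sum]
    refine sum_congr rfl fun Bj hj => ?_
    rw [inter_eq_right.2 (PA.le hi), inter_eq_right.2 (PB.le hj),
      hpsum Ai hi Bj hj Ai Subset.rfl Bj Subset.rfl]
    ring
  · rw [sum_blocks PA PB A B Subset.rfl Subset.rfl]
    refine sum_congr rfl fun Ai hi => sum_congr rfl fun Bj hj => ?_
    rw [inter_eq_right.2 (PA.le hi), inter_eq_right.2 (PB.le hj)]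
    have h1 : ∑ k ∈ Ai ×ˢ Bj, (p k - g k) = (d - dens G Ai Bj) * ((Ai.card : ℝ) * Bj.card) := by
      rw [sum_sub_distrib, hpsum Ai hi Bj hj Ai Subset.rfl Bj Subset.rfl, sum_adj]
      ring
    have hpb := hpblock Ai hi Bj hj Ai Subset.rfl Bj Subset.rfl
    have h2 : ∑ k ∈ Ai ×ˢ Bj, |p k - g k| = |∑ k ∈ Ai ×ˢ Bj, (p k - g k)| := by
      rcases hor Ai Bj with h | h
      · have hle : ∀ k ∈ Ai ×ˢ Bj, p k - g k ≤ 0 := fun k hk => by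
          rw [hpb k hk]
          rcases hg01 k with h' | h' <;> rw [h'] <;> linarith [hαβ Ai Bj]
        rw [abs_of_nonpos (sum_nonpos hle), ← sum_neg_distrib]
        exact sum_congr rfl fun k hk => abs_of_nonpos (hle k hk)
      · have hle : ∀ k ∈ Ai ×ˢ Bj, 0 ≤ p k - g k := fun k hk => by
          rw [hpb k hk]
          rcases hg01 k with h' | h' <;> rw [h'] <;> linarith [hα Ai Bj]
        rw [abs_of_nonneg (sum_nonneg hle)]
        exact sum_congr rfl fun k hk => abs_of_nonneg (hle k hk)
    rw [h2, h1, abs_mul, abs_sub_comm, abs_of_nonneg (by positivity : (0 : ℝ) ≤ Ai.card * Bj.card)]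
  · intro S hS T hT
    rw [sum_blocks PA PB S T hS hT, ← sum_card_blocks PA PB S T hS hT, mul_sum, ← sum_sub_distrib]
    refine (abs_sum_le_sum_abs _ _).trans (sum_le_sum fun Ai hi => ?_)
    rw [mul_sum, ← sum_sub_distrib]
    refine (abs_sum_le_sum_abs _ _).trans (sum_le_sum fun Bj hj => ?_)
    rw [hpsum Ai hi Bj hj _ inter_subset_right _ inter_subset_right, add_sub_cancel_left,
      abs_mul, abs_mul, abs_of_nonneg (hβ Ai Bj),
      abs_of_nonneg (by positivity : (0 : ℝ) ≤ (S ∩ Ai).card * (T ∩ Bj).card)]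
    exact mul_le_of_le_one_left (by positivity) (by linarith [hα Ai Bj, hαβ Ai Bj])

/-- **The perturbation lemma (Lemma 2.4).**
Let `G` be a bipartite graph with vertex classes `(A,B)` and density `d`, and let
`PA ∪ PB` be a weak `ε`-regular partition of `G` in the bipartite sense. If
`|A|, |B| ≥ 8/ε⁴`, then by modifying at most `Δ = Σ_{i,j} |d_{i,j} − d|·|A_i||B_j|` edges
one can turn `G` into a bipartite graph `G̃` (on the same vertex classes) in which the
pair `(A,B)` is `2ε`-regular. -/
theorem perturbation_lemma {V : Type*} [Fintype V] [DecidableEq V] (G : SimpleGraph V)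
    (A B : Finset V) (hAB : Disjoint A B)
    (hbip : ∀ u v, G.Adj u v → (u ∈ A ∧ v ∈ B) ∨ (u ∈ B ∧ v ∈ A))
    (PA : Finpartition A) (PB : Finpartition B) (ε : ℝ) (hε : 0 < ε)
    (hweak : ∀ S ⊆ A, ∀ T ⊆ B, ε * A.card ≤ S.card → ε * B.card ≤ T.card →
      ∑ Ai ∈ PA.parts, ∑ Bj ∈ PB.parts,
        ((S ∩ Ai).card : ℝ) * ((T ∩ Bj).card : ℝ) / (S.card * T.card) *
          |dens G (S ∩ Ai) (T ∩ Bj) - dens G Ai Bj| ≤ ε)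
    (hA : (8 : ℝ) / ε ^ 4 ≤ A.card) (hB : (8 : ℝ) / ε ^ 4 ≤ B.card) :
    ∃ Gt : SimpleGraph V,
      (∀ u v, Gt.Adj u v → (u ∈ A ∧ v ∈ B) ∨ (u ∈ B ∧ v ∈ A)) ∧
      ((symmDiff G.edgeSet Gt.edgeSet).ncard : ℝ) ≤
        ∑ Ai ∈ PA.parts, ∑ Bj ∈ PB.parts,
          |dens G Ai Bj - dens G A B| * ((Ai.card : ℝ) * Bj.card) ∧
      RegPair Gt (2 * ε) A B := by
  have hε4 : 0 < ε ^ 4 := by positivity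
  have ha0 : (0 : ℝ) < A.card := lt_of_lt_of_le (by positivity) hA
  have hb0 : (0 : ℝ) < B.card := lt_of_lt_of_le (by positivity) hB
  rcases lt_or_ge (1 / 2) ε with hbig | hε2
  · -- `2ε > 1`: no subset is large enough, so regularity is vacuous.
    refine ⟨G, hbip, ?_, ?_⟩
    · simp only [symmDiff_self, Set.bot_eq_empty, Set.ncard_empty, Nat.cast_zero]
      positivity
    · intro A' hA' B' _ hc _
      have : (A'.card : ℝ) ≤ A.card := by exact_mod_cast card_le_card hA'
      nlinarith
  obtain ⟨p, hp0, hp1, hpd, hpΔ, hpST⟩ :=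
    exists_target G A B PA PB (dens G A B) (pair_dens_nonneg G A B) (pair_dens_le_one G A B)
  set g : V × V → ℝ := fun k => if G.Adj k.1 k.2 then (1 : ℝ) else 0 with hg
  have hg01 : ∀ k, g k = 0 ∨ g k = 1 := fun k => by
    simp only [hg]; split_ifs <;> simp
  obtain ⟨x, hx, hxΔ, η, hxAB, hxST⟩ := exists_regular_matrix A B ε (dens G A B) hε hε2 g p hg01
    hp0 hp1 (sum_adj G A B) hpd (by
      intro S hS T hT hSc hTc
      have hs : (0 : ℝ) < S.card := lt_of_lt_of_le (by positivity) hSc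
      have ht : (0 : ℝ) < T.card := lt_of_lt_of_le (by positivity) hTc
      refine (hpST S hS T hT).trans ?_
      rw [← div_le_iff₀ (by positivity), sum_div]
      refine le_trans (le_of_eq ?_) (hweak S hS T hT hSc hTc)
      refine sum_congr rfl fun Ai _ => ?_
      rw [sum_div]
      exact sum_congr rfl fun Bj _ => by ring) hA hB
  let Gt : SimpleGraph V :=
    { Adj := fun u v => (u ∈ A ∧ v ∈ B ∧ x (u, v) = 1) ∨ (v ∈ A ∧ u ∈ B ∧ x (v, u) = 1)
      symm := ⟨fun u v h => h.symm⟩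
      loopless := ⟨fun u h => by
        rcases h with h | h <;> exact disjoint_left.1 hAB h.1 h.2.1⟩ }
  have hGt : ∀ u ∈ A, ∀ v ∈ B, (Gt.Adj u v ↔ x (u, v) = 1) := by
    intro u hu v hv
    have hv' : v ∉ A := disjoint_right.1 hAB hv
    simp [Gt, hu, hv, hv']
  have hGtsum : ∀ S ⊆ A, ∀ T ⊆ B,
      ∑ k ∈ S ×ˢ T, x k = dens Gt S T * (S.card * T.card) := by
    intro S hS T hT
    rw [← sum_adj]
    refine sum_congr rfl ?_
    rintro ⟨u, v⟩ hk
    obtain ⟨hu, hv⟩ := mem_product.1 hk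
    rcases hx (u, v) with h | h <;> simp [hGt u (hS hu) v (hT hv), h]
  refine ⟨Gt, ?_, ?_, ?_⟩
  · rintro u v (h | h)
    · exact Or.inl ⟨h.1, h.2.1⟩
    · exact Or.inr ⟨h.2.1, h.1⟩
  · rw [← hpΔ]
    refine le_trans ?_ hxΔ
    let M := (A ×ˢ B).filter fun k => x k ≠ g k
    have hM : ∑ k ∈ A ×ˢ B, |x k - g k| = M.card := by
      rw [← sum_boole]
      refine sum_congr rfl fun k _ => ?_
      rcases hx k with h | h <;> rcases hg01 k with h' | h' <;> simp [h, h']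
    rw [hM]
    have hmem : ∀ u ∈ A, ∀ v ∈ B, ¬ (G.Adj u v ↔ Gt.Adj u v) → (u, v) ∈ M := by
      intro u hu v hv hne
      refine mem_filter.2 ⟨mem_product.2 ⟨hu, hv⟩, fun h => hne ?_⟩
      rw [hGt u hu v hv, h]
      simp [hg]
    have hsub : symmDiff G.edgeSet Gt.edgeSet ⊆
        (fun k : V × V => s(k.1, k.2)) '' (M : Set (V × V)) := by
      intro e
      induction e using Sym2.ind with
      | _ u v =>
        intro he
        have hne : ¬ (G.Adj u v ↔ Gt.Adj u v) := by
          simp only [Set.mem_symmDiff, SimpleGraph.mem_edgeSet] at he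
          tauto
        have hside : (u ∈ A ∧ v ∈ B) ∨ (u ∈ B ∧ v ∈ A) := by
          by_cases h : G.Adj u v
          · exact hbip u v h
          · have h' : Gt.Adj u v := by tauto
            rcases h' with h' | h'
            · exact Or.inl ⟨h'.1, h'.2.1⟩
            · exact Or.inr ⟨h'.2.1, h'.1⟩
        rcases hside with ⟨hu, hv⟩ | ⟨hu, hv⟩
        · exact ⟨(u, v), hmem u hu v hv hne, rfl⟩
        · refine ⟨(v, u), hmem v hv u hu ?_, Sym2.eq_swap⟩
          rwa [G.adj_comm, Gt.adj_comm]
    have h1 := Set.ncard_le_ncard hsub (Set.toFinite _)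
    have h2 := Set.ncard_image_le (f := fun k : V × V => s(k.1, k.2)) (M.finite_toSet)
    rw [Set.ncard_coe_finset] at h2
    exact_mod_cast h1.trans h2
  · intro S hS T hT hSc hTc
    have hs : (0 : ℝ) < S.card := lt_of_lt_of_le (by positivity) hSc
    have ht : (0 : ℝ) < T.card := lt_of_lt_of_le (by positivity) hTc
    have h1 := hxST S hS T hT hSc hTc
    rw [hGtsum S hS T hT, ← sub_mul, abs_mul, abs_of_pos (mul_pos hs ht)] at h1
    rw [hGtsum A Subset.rfl B Subset.rfl, ← sub_mul, abs_mul, abs_of_pos (mul_pos ha0 hb0)] at hxAB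
    have h1' := le_of_mul_le_mul_right h1 (mul_pos hs ht)
    have h2' := le_of_mul_le_mul_right hxAB (mul_pos ha0 hb0)
    rw [abs_le] at *
    constructor <;> linarith
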